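/- arXiv:2202.04339 — 5 statements merged into one kernel-verified Lean document; each statement's English description precedes it below -/
import Mathlib

section
/- Let J ≥ 1, v₀,…,v_J ∈ ℝ, and let ε = (ε₁,…,ε_J) be a random vector on ℝ^J with density Σ_{k=1}^m ω_k φ(·; μ_k, σ_k), where m ≥ 1, ω_k > 0 with Σ_{k=1}^m ω_k = 1, μ_k ∈ ℝ^J and σ_k > 0; set ε₀ = 0. Define A_k = log Σ_{j=1}^J exp((v_j + μ_{jk})/σ_k) and a_k = v₀/σ_k + γ − A_k. Then Pr(v₀ + ε₀ ≥ v_j + ε_j for all j = 1,…,J) = Σ_{k=1}^m ω_k exp(−e^{−a_k}). -/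
open MeasureTheory Real

/-- The standardized univariate Gumbel density `φ(z) = exp(−z − γ − e^{−(z+γ)})`. -/
noncomputable def gumbelPdf (z : ℝ) : ℝ :=
  Real.exp (-z - Real.eulerMascheroniConstant - Real.exp (-(z + Real.eulerMascheroniConstant)))

/-- The multivariate Gumbel density `φ(z; μ, σ) = ∏_j (1/σ) φ((z_j − μ_j)/σ)`. -/
noncomputable def mGumbelPdf {J : ℕ} (μ : Fin J → ℝ) (σ : ℝ) (z : Fin J → ℝ) : ℝ :=
  ∏ j, (1 / σ) * gumbelPdf ((z j - μ j) / σ)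

/-!
A Gumbel variable with location `μ` and scale `σ` has distribution function `F ((x - μ) / σ)` with
`F z = exp (-e^{-(z + γ)})`. Conditionally on the mixture component the coordinates are independent,
so alternative `0` is chosen with probability `∏ j, F ((v₀ - v j - μ j) / σ)`. Gumbel laws of equal
scale are max-stable: the exponents `e^{-(x - y j + γ)}` sum to `e^{-(x - log (∑ j, e^{y j}) + γ)}`,
which collapses the product to one value of `F` at a location shifted by a log-sum-exp.
-/

open Set Filter Topology

/-- The distribution function `exp (-e^{-(z + γ)})` of the standardized Gumbel law. -/
noncomputable def gumbelCdf (z : ℝ) : ℝ :=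
  exp (-exp (-(z + eulerMascheroniConstant)))

theorem integrable_deriv_of_nonneg_of_bounded {g g' : ℝ → ℝ} {C : ℝ}
    (hderiv : ∀ x, HasDerivAt g (g' x) x) (g'_nonneg : ∀ x, 0 ≤ g' x) (hg : ∀ x, |g x| ≤ C) :
    Integrable g' := by
  have hint (a b : ℝ) : IntervalIntegrable g' volume a b :=
    intervalIntegral.intervalIntegrable_deriv_of_nonneg
      (fun x _ => (hderiv x).continuousAt.continuousWithinAt)
      (fun x _ => hderiv x) (fun x _ => g'_nonneg x)
  refine integrable_of_intervalIntegral_norm_bounded (C + C) (fun t => (hint (-t) t).1)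
    tendsto_neg_atTop_atBot tendsto_id (.of_forall fun t => ?_)
  calc ∫ x in -t..t, ‖g' x‖
    _ = ∫ x in -t..t, g' x := by simp only [norm_of_nonneg (g'_nonneg _)]
    _ = g t - g (-t) :=
      intervalIntegral.integral_eq_sub_of_hasDerivAt (fun x _ => hderiv x) (hint _ _)
    _ ≤ C + C := by linarith [le_of_abs_le (hg t), neg_le_of_abs_le (hg (-t))]

theorem setIntegral_univ_pi_prod_eq_prod {𝕜 ι : Type*} [RCLike 𝕜] [Fintype ι] {E : ι → Type*}
    [∀ i, MeasurableSpace (E i)] {μ : (i : ι) → Measure (E i)} [∀ i, SigmaFinite (μ i)]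
    (s : (i : ι) → Set (E i)) (f : (i : ι) → E i → 𝕜) :
    ∫ x in univ.pi s, ∏ i, f i (x i) ∂Measure.pi μ = ∏ i, ∫ x in s i, f i x ∂μ i := by
  rw [Measure.restrict_pi_pi, integral_fintype_prod_eq_prod]

theorem gumbelPdf_nonneg (z : ℝ) : 0 ≤ gumbelPdf z :=
  (exp_pos _).le

theorem abs_gumbelCdf_le_one (z : ℝ) : |gumbelCdf z| ≤ 1 := by
  rw [gumbelCdf, abs_exp, exp_le_one_iff, neg_nonpos]
  exact (exp_pos _).le

theorem gumbelPdf_eq_gumbelCdf_mul (z : ℝ) :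
    gumbelPdf z = gumbelCdf z * exp (-(z + eulerMascheroniConstant)) := by
  rw [gumbelPdf, gumbelCdf, ← exp_add]
  ring_nf

theorem hasDerivAt_gumbelCdf (z : ℝ) : HasDerivAt gumbelCdf (gumbelPdf z) z := by
  rw [gumbelPdf_eq_gumbelCdf_mul]
  exact ((hasDerivAt_id z).add_const eulerMascheroniConstant).neg.exp.neg.exp.congr_deriv <| by
    simp [gumbelCdf]

theorem tendsto_gumbelCdf_atBot : Tendsto gumbelCdf atBot (𝓝 0) :=
  tendsto_exp_neg_atTop_nhds_zero.comp <| tendsto_exp_atTop.comp <|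
    tendsto_neg_atBot_atTop.comp <| tendsto_atBot_add_const_right _ _ tendsto_id

theorem integrable_gumbelPdf : Integrable gumbelPdf :=
  integrable_deriv_of_nonneg_of_bounded hasDerivAt_gumbelCdf gumbelPdf_nonneg abs_gumbelCdf_le_one

theorem integrable_gumbelPdf_sub_div (μ : ℝ) {σ : ℝ} (hσ : σ ≠ 0) :
    Integrable fun x => 1 / σ * gumbelPdf ((x - μ) / σ) :=
  ((integrable_gumbelPdf.comp_div hσ).comp_sub_right μ).const_mul (1 / σ)

theorem integral_Iic_gumbelPdf_sub_div (μ : ℝ) {σ : ℝ} (hσ : 0 < σ) (b : ℝ) :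
    ∫ x in Iic b, 1 / σ * gumbelPdf ((x - μ) / σ) = gumbelCdf ((b - μ) / σ) := by
  have hderiv (x : ℝ) :
      HasDerivAt (fun x => gumbelCdf ((x - μ) / σ)) (1 / σ * gumbelPdf ((x - μ) / σ)) x := by
    rw [mul_comm]
    exact (hasDerivAt_gumbelCdf _).comp x (((hasDerivAt_id x).sub_const μ).div_const σ)
  have hlim : Tendsto (fun x => gumbelCdf ((x - μ) / σ)) atBot (𝓝 0) :=
    tendsto_gumbelCdf_atBot.comp <|
      (tendsto_atBot_add_const_right _ (-μ) tendsto_id).atBot_div_const hσ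
  rw [integral_Iic_of_hasDerivAt_of_tendsto' (fun x _ => hderiv x)
    (integrable_gumbelPdf_sub_div μ hσ.ne').integrableOn hlim, sub_zero]

theorem prod_gumbelCdf_sub {ι : Type*} [Fintype ι] [Nonempty ι] (x : ℝ) (y : ι → ℝ) :
    ∏ j, gumbelCdf (x - y j) = gumbelCdf (x - log (∑ j, exp (y j))) := by
  have hsum : 0 < ∑ j, exp (y j) :=
    Finset.sum_pos (fun _ _ => exp_pos _) Finset.univ_nonempty
  have hsplit (t : ℝ) : exp (-(x - t + eulerMascheroniConstant)) =
      exp t * exp (-(x + eulerMascheroniConstant)) := by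
    rw [← exp_add]
    ring_nf
  simp only [gumbelCdf, hsplit, exp_log hsum]
  rw [← exp_sum, Finset.sum_neg_distrib, Finset.sum_mul]

section

variable {J : ℕ} (μ : Fin J → ℝ) {σ : ℝ}

theorem integrable_mGumbelPdf (hσ : σ ≠ 0) : Integrable (mGumbelPdf μ σ) :=
  Integrable.fintype_prod fun j => integrable_gumbelPdf_sub_div (μ j) hσ

theorem setIntegral_univ_pi_Iic_mGumbelPdf (hσ : 0 < σ) (b : Fin J → ℝ) :
    ∫ z in univ.pi fun j => Iic (b j), mGumbelPdf μ σ z = ∏ j, gumbelCdf ((b j - μ j) / σ) := by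
  simp only [mGumbelPdf, ← integral_Iic_gumbelPdf_sub_div _ hσ]
  exact setIntegral_univ_pi_prod_eq_prod _ fun j x => 1 / σ * gumbelPdf ((x - μ j) / σ)

theorem setIntegral_forall_add_le_mGumbelPdf [NeZero J] (hσ : 0 < σ) (v₀ : ℝ) (v : Fin J → ℝ) :
    ∫ z in {z | ∀ j, v j + z j ≤ v₀}, mGumbelPdf μ σ z =
      gumbelCdf (v₀ / σ - log (∑ j, exp ((v j + μ j) / σ))) := by
  have hset : {z : Fin J → ℝ | ∀ j, v j + z j ≤ v₀} = univ.pi fun j => Iic (v₀ - v j) := by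
    ext z
    simp only [mem_ofPred_eq, mem_univ_pi, mem_Iic, le_sub_iff_add_le']
  rw [hset, setIntegral_univ_pi_Iic_mGumbelPdf μ hσ, ← prod_gumbelCdf_sub]
  simp only [sub_sub, sub_div]

end

theorem ccp_zero_of_gumbel_mixture_general {ι : Type*} [Fintype ι] {J : ℕ} [NeZero J]
    (v₀ : ℝ) (v : Fin J → ℝ) (ω : ι → ℝ) (μ : ι → Fin J → ℝ) {σ : ι → ℝ} (hσ : ∀ k, 0 < σ k) :
    ∫ z in {z | ∀ j, v j + z j ≤ v₀}, ∑ k, ω k * mGumbelPdf (μ k) (σ k) z =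
      ∑ k, ω k * exp (-exp (-(v₀ / σ k + eulerMascheroniConstant -
        log (∑ j, exp ((v j + μ k j) / σ k))))) := by
  rw [integral_finsetSum _ fun k _ =>
    ((integrable_mGumbelPdf (μ k) (hσ k).ne').const_mul (ω k)).integrableOn]
  simp only [integral_const_mul, setIntegral_forall_add_le_mGumbelPdf _ (hσ _), gumbelCdf,
    sub_add_eq_add_sub]

/-- CCP of the base alternative `d = 0` under a finite location-scale mixture of Gumbels. -/
theorem ccp_zero_of_gumbel_mixture
    (J m : ℕ) (hJ : 1 ≤ J) (hm : 1 ≤ m)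
    (v : Fin (J + 1) → ℝ)
    (ω : Fin m → ℝ) (μ : Fin m → Fin J → ℝ) (σ : Fin m → ℝ)
    (hω : ∀ k, 0 < ω k) (hωsum : ∑ k, ω k = 1) (hσ : ∀ k, 0 < σ k)
    (A a : Fin m → ℝ)
    (hA : ∀ k, A k = Real.log (∑ j : Fin J, Real.exp ((v j.succ + μ k j) / σ k)))
    (ha : ∀ k, a k = v 0 / σ k + Real.eulerMascheroniConstant - A k) :
    ∫ z in {z : Fin J → ℝ | ∀ j : Fin J, v j.succ + z j ≤ v 0 + 0},
        (∑ k, ω k * mGumbelPdf (μ k) (σ k) z) =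
      ∑ k, ω k * Real.exp (-Real.exp (-a k)) := by
  have : NeZero J := ⟨Nat.one_le_iff_ne_zero.mp hJ⟩
  simpa only [ha, hA, add_zero] using
    ccp_zero_of_gumbel_mixture_general (v 0) (fun j => v j.succ) ω μ hσ
end

section
/- Let J ≥ 1, v₀,…,v_J ∈ ℝ, and let ε = (ε₁,…,ε_J) be a random vector on ℝ^J with density Σ_{k=1}^m ω_k φ(·; μ_k, σ_k), where m ≥ 1, ω_k > 0 with Σ_{k=1}^m ω_k = 1, μ_k ∈ ℝ^J and σ_k > 0; set ε₀ = 0. Define A_k = log Σ_{j=1}^J exp((v_j + μ_{jk})/σ_k) and a_k = v₀/σ_k + γ − A_k. Then for every d ∈ {1,…,J}, Pr(v_d + ε_d ≥ v_j + ε_j for all j = 0,1,…,J) = Σ_{k=1}^m ω_k exp((v_d + μ_{dk})/σ_k − A_k) · (1 − exp(−e^{−a_k})). -/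
open MeasureTheory Real

/-!
A Gumbel variable has distribution function `x ↦ exp (-r * exp (-x / s))`, with its location
encoded in the rate `r > 0`. Absorb the utilities `v_j` into the locations. For a common scale `s`,
multiplying distribution functions adds the rates, so the density of alternative `d` times the
distribution functions of its competitors is `r d / ∑ j, r j` times the density of rate `∑ j, r j`.
Integrating over `[v₀, ∞)` gives the logit probability of `d` times the probability that the best
of the alternatives `1, …, J` beats `v₀`.
-/

section

open Filter Topology Set

lemma integrable_of_hasDerivAt_of_nonneg {g g' : ℝ → ℝ} {l m : ℝ}
    (hderiv : ∀ x, HasDerivAt g (g' x) x) (hg' : ∀ x, 0 ≤ g' x)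
    (hbot : Tendsto g atBot (𝓝 l)) (htop : Tendsto g atTop (𝓝 m)) : Integrable g' := by
  have hint (a b : ℝ) : IntervalIntegrable g' volume a b :=
    intervalIntegral.intervalIntegrable_deriv_of_nonneg
      (fun x _ ↦ (hderiv x).continuousAt.continuousWithinAt) (fun x _ ↦ hderiv x)
      fun x _ ↦ hg' x
  refine integrable_of_intervalIntegral_norm_tendsto (m - l) (fun x ↦ (hint (-x) x).1)
    tendsto_neg_atTop_atBot tendsto_id ?_
  simp only [norm_of_nonneg (hg' _),
    intervalIntegral.integral_eq_sub_of_hasDerivAt (fun x _ ↦ hderiv x) (hint _ _)]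
  exact htop.sub (hbot.comp tendsto_neg_atTop_atBot)

lemma integral_pi_eq_integral_insertNth {n : ℕ} {α : Fin (n + 1) → Type*}
    [∀ i, MeasurableSpace (α i)] (ν : ∀ i, Measure (α i)) [∀ i, SigmaFinite (ν i)]
    {E : Type*} [NormedAddCommGroup E] [NormedSpace ℝ E] {F : (∀ i, α i) → E}
    (hF : Integrable F (Measure.pi ν)) (d : Fin (n + 1)) :
    ∫ z, F z ∂Measure.pi ν =
      ∫ x, ∫ w, F (d.insertNth x w) ∂Measure.pi (fun i ↦ ν (d.succAbove i)) ∂ν d := by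
  have he := (measurePreserving_piFinSuccAbove ν d).symm
  rw [← he.integral_comp']
  exact integral_prod _ (he.integrable_comp_of_integrable hF)

section Argmax

variable {α : Type*} [TopologicalSpace α] [SecondCountableTopology α] [MeasurableSpace α]
  [OpensMeasurableSpace α] [PartialOrder α] [OrderClosedTopology α]

lemma measurableSet_mem_and_forall_le {ι : Type*} [Countable ι] {T : Set α}
    (hT : MeasurableSet T) (d : ι) :
    MeasurableSet {z : ι → α | z d ∈ T ∧ ∀ j, z j ≤ z d} := by
  simp only [ofPred_and, ofPred_forall]
  exact (measurable_pi_apply d hT).inter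
    (.iInter fun j ↦ measurableSet_le (measurable_pi_apply j) (measurable_pi_apply d))

lemma setIntegral_forall_le_prod {𝕜 : Type*} [RCLike 𝕜] {n : ℕ} (ν : Fin (n + 1) → Measure α)
    [∀ j, SigmaFinite (ν j)] {f : Fin (n + 1) → α → 𝕜}
    (hf : ∀ j, Integrable (f j) (ν j)) {T : Set α} (hT : MeasurableSet T) (d : Fin (n + 1)) :
    ∫ z in {z | z d ∈ T ∧ ∀ j, z j ≤ z d}, ∏ j, f j (z j) ∂Measure.pi ν =
      ∫ x in T, f d x * ∏ i, ∫ y in Iic x, f (d.succAbove i) y ∂ν (d.succAbove i) ∂ν d := by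
  have hS := measurableSet_mem_and_forall_le hT d
  rw [← integral_indicator hS,
    integral_pi_eq_integral_insertNth ν ((Integrable.fintype_prod hf).indicator hS) d,
    ← integral_indicator hT]
  congr 1 with x
  by_cases hx : x ∈ T
  · have hsection : d.insertNth (α := fun _ ↦ α) x ⁻¹' {z | z d ∈ T ∧ ∀ j, z j ≤ z d} =
        univ.pi fun _ ↦ Iic x := by
      ext w
      simp [hx, d.forall_iff_succAbove, Pi.le_def]
    simp only [← indicator_comp_right (d.insertNth (α := fun _ ↦ α) x), hsection,
      indicator_of_mem hx]
    rw [integral_indicator (.univ_pi fun _ ↦ measurableSet_Iic), Measure.restrict_pi_pi]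
    simp only [Function.comp_def, Fin.prod_univ_succAbove _ d, Fin.insertNth_apply_same,
      Fin.insertNth_apply_succAbove, integral_const_mul, integral_fintype_prod_eq_prod]
  · simp [indicator, hx]

end Argmax

/-- The distribution function of a Gumbel variable of scale `s` and mode `s * log r`. The rate `r`
is used in place of a location parameter because rates add up under maxima. -/
noncomputable def gumbelRateCDF (r s x : ℝ) : ℝ :=
  exp (-r * exp (-x / s))

/-- The density of `gumbelRateCDF r s`. -/
noncomputable def gumbelRatePDF (r s x : ℝ) : ℝ :=
  r / s * exp (-x / s) * gumbelRateCDF r s x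

section GumbelRate

variable {r s : ℝ}

lemma hasDerivAt_gumbelRateCDF (r s x : ℝ) :
    HasDerivAt (gumbelRateCDF r s) (gumbelRatePDF r s x) x := by
  convert! ((((hasDerivAt_id x).neg.div_const s).exp).const_mul (-r)).exp using 1
  simp only [gumbelRatePDF, gumbelRateCDF, id, Pi.neg_apply]
  ring

lemma gumbelRatePDF_nonneg (hr : 0 ≤ r) (hs : 0 ≤ s) (x : ℝ) : 0 ≤ gumbelRatePDF r s x := by
  unfold gumbelRatePDF gumbelRateCDF
  positivity

lemma tendsto_gumbelRateCDF_atTop (r : ℝ) (hs : 0 < s) :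
    Tendsto (gumbelRateCDF r s) atTop (𝓝 1) := by
  have h : Tendsto (fun x : ℝ ↦ exp (-x / s)) atTop (𝓝 0) :=
    tendsto_exp_atBot.comp (tendsto_neg_atTop_atBot.atBot_div_const hs)
  have hexp := (h.const_mul (-r)).rexp
  rwa [mul_zero, exp_zero] at hexp

lemma tendsto_gumbelRateCDF_atBot (hr : 0 < r) (hs : 0 < s) :
    Tendsto (gumbelRateCDF r s) atBot (𝓝 0) := by
  have h : Tendsto (fun x : ℝ ↦ exp (-x / s)) atBot atTop :=
    tendsto_exp_atTop.comp (tendsto_neg_atBot_atTop.atTop_div_const hs)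
  exact tendsto_exp_atBot.comp (h.const_mul_atTop_of_neg (neg_lt_zero.mpr hr))

lemma integrable_gumbelRatePDF (hr : 0 < r) (hs : 0 < s) : Integrable (gumbelRatePDF r s) :=
  integrable_of_hasDerivAt_of_nonneg (hasDerivAt_gumbelRateCDF r s)
    (gumbelRatePDF_nonneg hr.le hs.le) (tendsto_gumbelRateCDF_atBot hr hs)
    (tendsto_gumbelRateCDF_atTop r hs)

lemma integral_Iic_gumbelRatePDF (hr : 0 < r) (hs : 0 < s) (x : ℝ) :
    ∫ y in Iic x, gumbelRatePDF r s y = gumbelRateCDF r s x := by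
  rw [integral_Iic_of_hasDerivAt_of_tendsto' (fun y _ ↦ hasDerivAt_gumbelRateCDF r s y)
    (integrable_gumbelRatePDF hr hs).integrableOn (tendsto_gumbelRateCDF_atBot hr hs), sub_zero]

lemma integral_Ici_gumbelRatePDF (hr : 0 ≤ r) (hs : 0 < s) (x : ℝ) :
    ∫ y in Ici x, gumbelRatePDF r s y = 1 - gumbelRateCDF r s x := by
  rw [integral_Ici_eq_integral_Ioi]
  exact integral_Ioi_of_hasDerivAt_of_nonneg' (fun y _ ↦ hasDerivAt_gumbelRateCDF r s y)
    (fun y _ ↦ gumbelRatePDF_nonneg hr hs.le y) (tendsto_gumbelRateCDF_atTop r hs)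

lemma prod_gumbelRateCDF {ι : Type*} (t : Finset ι) (r : ι → ℝ) (s x : ℝ) :
    ∏ i ∈ t, gumbelRateCDF (r i) s x = gumbelRateCDF (∑ i ∈ t, r i) s x := by
  simp only [gumbelRateCDF, ← exp_sum, neg_mul, Finset.sum_neg_distrib, Finset.sum_mul]

lemma gumbelRatePDF_mul_gumbelRateCDF {q : ℝ} (hqr : r + q ≠ 0) (s x : ℝ) :
    gumbelRatePDF r s x * gumbelRateCDF q s x = r / (r + q) * gumbelRatePDF (r + q) s x := by
  have hadd : gumbelRateCDF (r + q) s x = gumbelRateCDF r s x * gumbelRateCDF q s x := by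
    simp only [gumbelRateCDF, ← exp_add]
    ring_nf
  rw [gumbelRatePDF, gumbelRatePDF, hadd]
  field_simp

lemma setIntegral_forall_le_prod_gumbelRatePDF {J : ℕ} {r : Fin J → ℝ} (hr : ∀ j, 0 < r j)
    (hs : 0 < s) (c : ℝ) (d : Fin J) :
    ∫ z in {z : Fin J → ℝ | c ≤ z d ∧ ∀ j, z j ≤ z d}, ∏ j, gumbelRatePDF (r j) s (z j) =
      r d / (∑ j, r j) * (1 - gumbelRateCDF (∑ j, r j) s c) := by
  have hsum : 0 < ∑ j, r j := Finset.sum_pos (fun j _ ↦ hr j) ⟨d, Finset.mem_univ d⟩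
  cases J with
  | zero => exact d.elim0
  | succ n =>
    have hmax (x : ℝ) : gumbelRatePDF (r d) s x *
        ∏ i, ∫ y in Iic x, gumbelRatePDF (r (d.succAbove i)) s y =
          r d / (∑ j, r j) * gumbelRatePDF (∑ j, r j) s x := by
      simp only [integral_Iic_gumbelRatePDF (hr _) hs, prod_gumbelRateCDF]
      rw [Fin.sum_univ_succAbove _ d] at hsum ⊢
      exact gumbelRatePDF_mul_gumbelRateCDF hsum.ne' s x
    calc
      _ = ∫ x in Ici c, gumbelRatePDF (r d) s x *
            ∏ i, ∫ y in Iic x, gumbelRatePDF (r (d.succAbove i)) s y :=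
        setIntegral_forall_le_prod (fun _ ↦ volume)
          (fun j ↦ integrable_gumbelRatePDF (hr j) hs) measurableSet_Ici d
      _ = _ := by
        simp only [hmax, integral_const_mul, integral_Ici_gumbelRatePDF hsum.le hs]

end GumbelRate

section MultivariateGumbel

variable {J : ℕ} {s : ℝ}

lemma one_div_mul_gumbelPdf (m s x : ℝ) :
    1 / s * gumbelPdf ((x - m) / s) =
      gumbelRatePDF (exp (m / s - eulerMascheroniConstant)) s x := by
  have hexp : exp (-((x - m) / s + eulerMascheroniConstant)) =
      exp (m / s - eulerMascheroniConstant) * exp (-x / s) := by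
    rw [← exp_add]
    ring_nf
  rw [gumbelPdf, ← neg_add', sub_eq_add_neg, exp_add, hexp, gumbelRatePDF, gumbelRateCDF, neg_mul]
  ring

lemma mGumbelPdf_eq_prod_gumbelRatePDF (μ : Fin J → ℝ) (s : ℝ) (z : Fin J → ℝ) :
    mGumbelPdf μ s z = ∏ j, gumbelRatePDF (exp (μ j / s - eulerMascheroniConstant)) s (z j) := by
  simp only [mGumbelPdf, one_div_mul_gumbelPdf]

lemma integrable_mGumbelPdf_s1 (μ : Fin J → ℝ) (hs : 0 < s) : Integrable (mGumbelPdf μ s) := by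
  simp only [funext (mGumbelPdf_eq_prod_gumbelRatePDF μ s)]
  exact Integrable.fintype_prod fun j ↦ integrable_gumbelRatePDF (exp_pos _) hs

lemma mGumbelPdf_add_add (u μ : Fin J → ℝ) (s : ℝ) (z : Fin J → ℝ) :
    mGumbelPdf (u + μ) s (u + z) = mGumbelPdf μ s z := by
  simp only [mGumbelPdf, Pi.add_apply, add_sub_add_left_eq_sub]

lemma setIntegral_forall_le_mGumbelPdf (μ : Fin J → ℝ) (hs : 0 < s) (c : ℝ) (d : Fin J) {A : ℝ}
    (hA : A = log (∑ j, exp (μ j / s))) :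
    ∫ z in {z : Fin J → ℝ | c ≤ z d ∧ ∀ j, z j ≤ z d}, mGumbelPdf μ s z =
      exp (μ d / s - A) * (1 - exp (-exp (-(c / s + eulerMascheroniConstant - A)))) := by
  have hrates : ∑ j, exp (μ j / s - eulerMascheroniConstant) =
      exp (A - eulerMascheroniConstant) := by
    have hsum : 0 < ∑ j, exp (μ j / s) :=
      Finset.sum_pos (fun _ _ ↦ exp_pos _) ⟨d, Finset.mem_univ d⟩
    simp only [exp_sub, ← Finset.sum_div, hA, exp_log hsum]
  simp only [mGumbelPdf_eq_prod_gumbelRatePDF]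
  rw [setIntegral_forall_le_prod_gumbelRatePDF (fun _ ↦ exp_pos _) hs, hrates, ← exp_sub,
    sub_sub_sub_cancel_right, gumbelRateCDF, neg_mul, ← exp_add]
  ring_nf

lemma setIntegral_forall_add_le_mGumbelPdf_s1 (μ : Fin J → ℝ) (s c : ℝ) (u : Fin J → ℝ)
    (d : Fin J) :
    ∫ z in {z : Fin J → ℝ | c ≤ u d + z d ∧ ∀ j, u j + z j ≤ u d + z d}, mGumbelPdf μ s z =
      ∫ y in {y : Fin J → ℝ | c ≤ y d ∧ ∀ j, y j ≤ y d}, mGumbelPdf (u + μ) s y := by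
  have htranslate := (measurePreserving_add_left volume u).setIntegral_preimage_emb
    (measurableEmbedding_addLeft u) (mGumbelPdf (u + μ) s) {y | c ≤ y d ∧ ∀ j, y j ≤ y d}
  simp only [mGumbelPdf_add_add] at htranslate
  exact htranslate

end MultivariateGumbel

theorem ccp_pos_of_gumbel_mixture_general {J : ℕ} {κ : Type*} [Fintype κ]
    (v : Fin (J + 1) → ℝ) (ω : κ → ℝ) (μ : κ → Fin J → ℝ) (σ : κ → ℝ) (hσ : ∀ k, 0 < σ k)
    (A a : κ → ℝ) (hA : ∀ k, A k = log (∑ j : Fin J, exp ((v j.succ + μ k j) / σ k)))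
    (ha : ∀ k, a k = v 0 / σ k + eulerMascheroniConstant - A k) (d : Fin J) :
    ∫ z in {z : Fin J → ℝ |
        (v 0 + 0 ≤ v d.succ + z d) ∧ ∀ j : Fin J, v j.succ + z j ≤ v d.succ + z d},
        (∑ k, ω k * mGumbelPdf (μ k) (σ k) z) =
      ∑ k, ω k * exp ((v d.succ + μ k d) / σ k - A k) * (1 - exp (-exp (-a k))) := by
  rw [integral_finsetSum _ fun k _ ↦
    ((integrable_mGumbelPdf_s1 (μ k) (hσ k)).const_mul (ω k)).integrableOn]
  refine Finset.sum_congr rfl fun k _ ↦ ?_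
  rw [integral_const_mul, mul_assoc, add_zero, ha k,
    setIntegral_forall_add_le_mGumbelPdf_s1 (μ k) (σ k) (v 0) (fun j ↦ v j.succ) d,
    setIntegral_forall_le_mGumbelPdf ((fun j : Fin J ↦ v j.succ) + μ k) (hσ k) (v 0) d (hA k)]
  rfl

end

/-- CCP of alternative `d ∈ {1,…,J}` under a finite location-scale mixture of Gumbels. -/
theorem ccp_pos_of_gumbel_mixture
    (J m : ℕ) (hJ : 1 ≤ J) (hm : 1 ≤ m)
    (v : Fin (J + 1) → ℝ)
    (ω : Fin m → ℝ) (μ : Fin m → Fin J → ℝ) (σ : Fin m → ℝ)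
    (hω : ∀ k, 0 < ω k) (hωsum : ∑ k, ω k = 1) (hσ : ∀ k, 0 < σ k)
    (A a : Fin m → ℝ)
    (hA : ∀ k, A k = Real.log (∑ j : Fin J, Real.exp ((v j.succ + μ k j) / σ k)))
    (ha : ∀ k, a k = v 0 / σ k + Real.eulerMascheroniConstant - A k)
    (d : Fin J) :
    ∫ z in {z : Fin J → ℝ |
        (v 0 + 0 ≤ v d.succ + z d) ∧ ∀ j : Fin J, v j.succ + z j ≤ v d.succ + z d},
        (∑ k, ω k * mGumbelPdf (μ k) (σ k) z) =
      ∑ k, ω k * Real.exp ((v d.succ + μ k d) / σ k - A k) *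
        (1 - Real.exp (-Real.exp (-a k))) :=
  ccp_pos_of_gumbel_mixture_general v ω μ σ hσ A a hA ha d
end

section
/- Let J ≥ 1, v₀,…,v_J ∈ ℝ, and let ε = (ε₁,…,ε_J) be a random vector on ℝ^J with density Σ_{k=1}^m ω_k φ(·; μ_k, σ_k), where m ≥ 1, ω_k > 0 with Σ_{k=1}^m ω_k = 1, μ_k ∈ ℝ^J and σ_k > 0; set ε₀ = 0. Define A_k = log Σ_{j=1}^J exp((v_j + μ_{jk})/σ_k) and a_k = v₀/σ_k + γ − A_k. Then E[max_{j=0,1,…,J} (v_j + ε_j)] = Σ_{k=1}^m ω_k σ_k [A_k + E1(e^{−a_k})]. -/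
open MeasureTheory Real

/-- The exponential integral `E1(z) = ∫_z^∞ e^{−t}/t dt`. -/
noncomputable def E1 (z : ℝ) : ℝ := ∫ t in Set.Ioi z, Real.exp (-t) / t

/-!
If `X` is Gumbel with location `m` and scale `σ`, then `T = e^{-((X - m)/σ + γ)}` is standard
exponential. Since `E[log T] = Γ'(1) = -γ`, this gives `E[X] = m`; and since
`max(c, X) = X + (c - X)⁺` with `c - X = σ (log T - log s)`, where `s` is the value of `T` at
`X = c`, integration by parts gives `E[max(c, X)] = m + σ ∫_s^∞ e^{-t}/t dt`. Products of Gumbel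
distribution functions with a common scale are again Gumbel distribution functions, so under each
mixture component `max_{j ≥ 1} (v_j + ε_j)` is Gumbel with location `σ_k A_k` and scale `σ_k`.
-/

open ProbabilityTheory Set Filter Topology

local notation "γ" => Real.eulerMascheroniConstant

section Exponential

theorem expMeasure_eq_withDensity (r : ℝ) :
    expMeasure r =
      (volume.restrict (Ioi 0)).withDensity fun t => ENNReal.ofReal (r * exp (-(r * t))) := by
  rw [restrict_Ioi_eq_restrict_Ici, ← withDensity_indicator measurableSet_Ici]
  refine congrArg volume.withDensity (funext fun t => ?_)
  change exponentialPDF r t = _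
  by_cases ht : 0 ≤ t <;> simp [exponentialPDF_eq, ht]

theorem expMeasure_Ici {r t : ℝ} (hr : 0 < r) (ht : 0 ≤ t) :
    expMeasure r (Ici t) = ENNReal.ofReal (exp (-(r * t))) := by
  have hexp : IntegrableOn (fun x => exp (-(r * x))) (Ioi t) := by
    simpa only [neg_mul] using integrableOn_exp_mul_Ioi (neg_lt_zero.2 hr) t
  have htail : ∫ x in Ioi t, r * exp (-(r * x)) = exp (-(r * t)) := by
    simpa [integral_const_mul, mul_div_cancel₀, hr.ne'] using
      congrArg (r * ·) (integral_exp_mul_Ioi (neg_lt_zero.2 hr) t)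
  rw [expMeasure_eq_withDensity, restrict_Ioi_eq_restrict_Ici,
    withDensity_apply _ measurableSet_Ici, Measure.restrict_restrict measurableSet_Ici,
    inter_eq_left.2 (Ici_subset_Ici.2 ht), ← restrict_Ioi_eq_restrict_Ici,
    ← ofReal_integral_eq_lintegral_ofReal (hexp.const_mul r) (.of_forall fun x => by positivity),
    htail]

theorem integrable_expMeasure_one_iff {f : ℝ → ℝ} :
    Integrable f (expMeasure 1) ↔ IntegrableOn (fun t => f t * exp (-t)) (Ioi 0) := by
  rw [expMeasure_eq_withDensity, integrable_withDensity_iff (by fun_prop) (by simp)]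
  simp [IntegrableOn, exp_nonneg]

theorem integral_expMeasure_one (f : ℝ → ℝ) :
    ∫ t, f t ∂expMeasure 1 = ∫ t in Ioi 0, f t * exp (-t) := by
  rw [expMeasure_eq_withDensity, integral_withDensity_eq_integral_toReal_smul (by fun_prop)
    (by simp)]
  simp [exp_nonneg, mul_comm]

theorem integral_log_expMeasure_one : ∫ t, log t ∂expMeasure 1 = -γ := by
  have hGamma : HasDerivAt Complex.GammaIntegral (-(γ : ℂ)) 1 := by
    refine Complex.hasDerivAt_Gamma_one.congr_of_eventuallyEq ?_
    filter_upwards [(isOpen_lt continuous_const Complex.continuous_re).mem_nhds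
      (show (0 : ℝ) < (1 : ℂ).re by simp)] with z hz
    exact (Complex.Gamma_eq_integral hz).symm
  have h := (Complex.hasDerivAt_GammaIntegral (s := 1) (by simp)).unique hGamma
  simp only [sub_self, Complex.cpow_zero, one_mul, ← Complex.ofReal_mul] at h
  rw [integral_complex_ofReal] at h
  rw [integral_expMeasure_one]
  exact_mod_cast h

theorem integrable_log_expMeasure_one : Integrable log (expMeasure 1) := by
  -- A nonintegrable function has integral `0` by convention, but this integral is `-γ < 0`.
  refine Integrable.of_integral_ne_zero ?_
  rw [integral_log_expMeasure_one]
  linarith [one_half_lt_eulerMascheroniConstant]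

theorem tendsto_log_mul_exp_neg_atTop : Tendsto (fun t => log t * exp (-t)) atTop (𝓝 0) := by
  have h : log =o[atTop] exp := isLittleO_log_id_atTop.trans <| by
    simpa [Function.id_def] using isLittleO_pow_exp_atTop (n := 1)
  simpa only [div_eq_mul_inv, exp_neg] using h.tendsto_div_nhds_zero

theorem integrableOn_exp_neg_div_Ioi {s : ℝ} (hs : 0 < s) :
    IntegrableOn (fun t => exp (-t) / t) (Ioi s) := by
  refine Integrable.mono' ((integrableOn_exp_neg_Ioi s).const_mul s⁻¹)
    (by fun_prop : Measurable _).aestronglyMeasurable ?_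
  filter_upwards [self_mem_ae_restrict measurableSet_Ioi] with t ht
  have hst : s < t := ht
  rw [norm_of_nonneg (div_nonneg (exp_nonneg _) (hs.trans hst).le), div_eq_inv_mul]
  gcongr

theorem integral_log_sub_log_mul_exp_neg_Ioi {s : ℝ} (hs : 0 < s) :
    ∫ t in Ioi s, (log t - log s) * exp (-t) = E1 s := by
  have hlog : IntegrableOn (fun t => (log t - log s) * exp (-t)) (Ioi s) := by
    simp only [sub_mul]
    exact ((integrable_expMeasure_one_iff.1 integrable_log_expMeasure_one).mono_set
      (Ioi_subset_Ioi hs.le)).sub ((integrableOn_exp_neg_Ioi s).const_mul _)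
  have hderiv (t : ℝ) (ht : t ∈ Ici s) : HasDerivAt (fun t => -((log t - log s) * exp (-t)))
      ((log t - log s) * exp (-t) - exp (-t) / t) t := by
    have ht0 : t ≠ 0 := (hs.trans_le ht).ne'
    refine ((((hasDerivAt_log ht0).sub_const _).mul (hasDerivAt_neg t).exp).neg).congr_deriv ?_
    field_simp
    ring
  have hlim : Tendsto (fun t => -((log t - log s) * exp (-t))) atTop (𝓝 0) := by
    simpa [sub_mul] using (tendsto_log_mul_exp_neg_atTop.sub
      (tendsto_exp_neg_atTop_nhds_zero.const_mul (log s))).neg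
  have h := integral_Ioi_of_hasDerivAt_of_tendsto' hderiv
    (hlog.sub (integrableOn_exp_neg_div_Ioi hs)) hlim
  rw [integral_sub hlog (integrableOn_exp_neg_div_Ioi hs)] at h
  simpa [E1, sub_eq_zero] using h

theorem integral_max_log_sub_log_expMeasure_one {s : ℝ} (hs : 0 < s) :
    ∫ t, max (log t - log s) 0 ∂expMeasure 1 = E1 s := by
  rw [integral_expMeasure_one, ← integral_log_sub_log_mul_exp_neg_Ioi hs,
    setIntegral_eq_of_subset_of_forall_sdiff_eq_zero measurableSet_Ioi (Ioi_subset_Ioi hs.le)]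
  · refine setIntegral_congr_fun measurableSet_Ioi fun t ht => ?_
    simp only [max_eq_left (sub_nonneg.2 (log_le_log hs (le_of_lt ht)))]
  · rintro t ⟨ht0, hts⟩
    simp only [max_eq_right (sub_nonpos.2 (log_le_log ht0 (not_lt.1 hts))), zero_mul]

end Exponential

/-- The Gumbel density on `ℝ` with location `m` and scale `σ`; `mGumbelPdf` is a product of such
densities. -/
noncomputable def locScaleGumbelPdf (m σ x : ℝ) : ℝ := (1 / σ) * gumbelPdf ((x - m) / σ)

/-- The Gumbel distribution on `ℝ` with location `m` and scale `σ`. -/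
noncomputable def gumbelMeasure (m σ : ℝ) : Measure ℝ :=
  volume.withDensity fun x => ENNReal.ofReal (locScaleGumbelPdf m σ x)

/-- The substitution `x ↦ e^{-((x - m)/σ + γ)}`, which turns a Gumbel variable with location `m`
and scale `σ` into a standard exponential one. -/
noncomputable def gumbelToExp (m σ x : ℝ) : ℝ := exp (-((x - m) / σ + γ))

section Gumbel

variable (m σ x : ℝ)

theorem gumbelToExp_pos : 0 < gumbelToExp m σ x := exp_pos _

theorem log_gumbelToExp : log (gumbelToExp m σ x) = -((x - m) / σ + γ) := log_exp _

@[fun_prop]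
theorem continuous_gumbelToExp : Continuous (gumbelToExp m σ) := by
  unfold gumbelToExp
  fun_prop

theorem hasDerivAt_gumbelToExp :
    HasDerivAt (gumbelToExp m σ) (-(gumbelToExp m σ x / σ)) x := by
  refine ((((hasDerivAt_id x).sub_const m).div_const σ).add_const γ).neg.exp.congr_deriv ?_
  simp only [gumbelToExp, id, Pi.neg_apply]
  ring

theorem locScaleGumbelPdf_eq :
    locScaleGumbelPdf m σ x = gumbelToExp m σ x / σ * exp (-gumbelToExp m σ x) := by
  rw [locScaleGumbelPdf, gumbelPdf, gumbelToExp, sub_eq_add_neg _ (exp _), exp_add, neg_add,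
    ← sub_eq_add_neg]
  ring

@[fun_prop]
theorem continuous_locScaleGumbelPdf : Continuous (locScaleGumbelPdf m σ) := by
  unfold locScaleGumbelPdf gumbelPdf
  fun_prop

variable {σ}

theorem strictAnti_gumbelToExp (hσ : 0 < σ) : StrictAnti (gumbelToExp m σ) := by
  intro x y hxy
  unfold gumbelToExp
  gcongr

theorem range_gumbelToExp (hσ : 0 < σ) : range (gumbelToExp m σ) = Ioi 0 := by
  refine Subset.antisymm (range_subset_iff.2 (gumbelToExp_pos m σ)) fun t ht => ?_
  refine ⟨m + σ * (-log t - γ), ?_⟩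
  rw [gumbelToExp, add_sub_cancel_left, mul_div_cancel_left₀ _ hσ.ne', sub_add_cancel, neg_neg,
    exp_log ht]

theorem locScaleGumbelPdf_nonneg (hσ : 0 < σ) : 0 ≤ locScaleGumbelPdf m σ x :=
  mul_nonneg (by positivity) (exp_nonneg _)

theorem map_gumbelToExp_gumbelMeasure (hσ : 0 < σ) :
    (gumbelMeasure m σ).map (gumbelToExp m σ) = expMeasure 1 := by
  have hmeas : Measurable (gumbelToExp m σ) := by fun_prop
  have hpdf (x : ℝ) : ENNReal.ofReal (locScaleGumbelPdf m σ x) =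
      ENNReal.ofReal |-(gumbelToExp m σ x / σ)| *
        ENNReal.ofReal (1 * exp (-(1 * gumbelToExp m σ x))) := by
    rw [← ENNReal.ofReal_mul (abs_nonneg _), abs_neg,
      abs_of_pos (div_pos (gumbelToExp_pos m σ x) hσ), locScaleGumbelPdf_eq, one_mul, one_mul]
  ext B hB
  rw [Measure.map_apply hmeas hB, gumbelMeasure, withDensity_apply _ (hmeas hB),
    lintegral_congr hpdf, ← lintegral_image_eq_lintegral_abs_deriv_mul (hmeas hB)
      (fun x _ => (hasDerivAt_gumbelToExp m σ x).hasDerivWithinAt)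
      (strictAnti_gumbelToExp m hσ).injective.injOn (fun t => ENNReal.ofReal (1 * exp (-(1 * t)))),
    image_preimage_eq_inter_range, range_gumbelToExp m hσ, expMeasure_eq_withDensity,
    withDensity_apply _ hB, Measure.restrict_restrict hB]

theorem isProbabilityMeasure_gumbelMeasure (hσ : 0 < σ) :
    IsProbabilityMeasure (gumbelMeasure m σ) := by
  have := isProbabilityMeasure_expMeasure one_pos
  rw [← map_gumbelToExp_gumbelMeasure m hσ] at this
  exact Measure.isProbabilityMeasure_of_map (gumbelToExp m σ)

theorem integrable_locScaleGumbelPdf (hσ : 0 < σ) : Integrable (locScaleGumbelPdf m σ) := by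
  have := isProbabilityMeasure_gumbelMeasure m hσ
  refine ⟨(continuous_locScaleGumbelPdf m σ).aestronglyMeasurable, ?_⟩
  rw [hasFiniteIntegral_iff_ofReal (.of_forall fun x => locScaleGumbelPdf_nonneg m x hσ)]
  simpa [gumbelMeasure] using measure_lt_top (gumbelMeasure m σ) univ

theorem gumbelMeasure_Iic (hσ : 0 < σ) :
    gumbelMeasure m σ (Iic x) = ENNReal.ofReal (exp (-gumbelToExp m σ x)) := by
  have hpre : Iic x = gumbelToExp m σ ⁻¹' Ici (gumbelToExp m σ x) := by
    ext y
    exact (strictAnti_gumbelToExp m hσ).le_iff_ge.symm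
  rw [hpre, ← Measure.map_apply (by fun_prop) measurableSet_Ici,
    map_gumbelToExp_gumbelMeasure m hσ, expMeasure_Ici one_pos (gumbelToExp_pos m σ x).le, one_mul]

theorem integral_comp_gumbelToExp (hσ : 0 < σ) {g : ℝ → ℝ} (hg : Measurable g) :
    ∫ x, g (gumbelToExp m σ x) ∂gumbelMeasure m σ = ∫ t, g t ∂expMeasure 1 := by
  rw [← map_gumbelToExp_gumbelMeasure m hσ, integral_map (by fun_prop) hg.aestronglyMeasurable]

theorem eq_sub_mul_log_gumbelToExp (hσ : 0 < σ) :
    x = m - σ * γ - σ * log (gumbelToExp m σ x) := by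
  rw [log_gumbelToExp]
  field_simp
  ring

theorem integrable_log_gumbelToExp (hσ : 0 < σ) :
    Integrable (fun x => log (gumbelToExp m σ x)) (gumbelMeasure m σ) := by
  have h := integrable_log_expMeasure_one
  rw [← map_gumbelToExp_gumbelMeasure m hσ] at h
  exact h.comp_measurable (by fun_prop)

theorem integrable_id_gumbelMeasure (hσ : 0 < σ) :
    Integrable (fun x => x) (gumbelMeasure m σ) := by
  have := isProbabilityMeasure_gumbelMeasure m hσ
  refine ((integrable_const (m - σ * γ)).sub
    ((integrable_log_gumbelToExp m hσ).const_mul σ)).congr (.of_forall fun x => ?_)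
  exact (eq_sub_mul_log_gumbelToExp m x hσ).symm

theorem integral_id_gumbelMeasure (hσ : 0 < σ) : ∫ x, x ∂gumbelMeasure m σ = m := by
  have := isProbabilityMeasure_gumbelMeasure m hσ
  calc ∫ x, x ∂gumbelMeasure m σ
      = ∫ x, (m - σ * γ - σ * log (gumbelToExp m σ x)) ∂gumbelMeasure m σ := by
        simp_rw [← eq_sub_mul_log_gumbelToExp m _ hσ]
    _ = m - σ * γ - σ * ∫ t, log t ∂expMeasure 1 := by
        rw [integral_sub (integrable_const _) ((integrable_log_gumbelToExp m hσ).const_mul σ),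
          integral_const_mul, integral_comp_gumbelToExp m hσ measurable_log]
        simp
    _ = m := by
        rw [integral_log_expMeasure_one]
        ring

theorem integral_max_sub_gumbelMeasure (hσ : 0 < σ) (c : ℝ) :
    ∫ x, max (c - x) 0 ∂gumbelMeasure m σ = σ * E1 (gumbelToExp m σ c) := by
  have hmax (x : ℝ) : max (c - x) 0 =
      σ * max (log (gumbelToExp m σ x) - log (gumbelToExp m σ c)) 0 := by
    have hsub : c - x = σ * (log (gumbelToExp m σ x) - log (gumbelToExp m σ c)) := by
      linarith [eq_sub_mul_log_gumbelToExp m x hσ, eq_sub_mul_log_gumbelToExp m c hσ]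
    rw [mul_max_of_nonneg _ _ hσ.le, mul_zero, ← hsub]
  simp_rw [hmax]
  rw [integral_const_mul, integral_comp_gumbelToExp m hσ
    (g := fun t => max (log t - log (gumbelToExp m σ c)) 0) (by fun_prop),
    integral_max_log_sub_log_expMeasure_one (gumbelToExp_pos m σ c)]

theorem integrable_max_gumbelMeasure (hσ : 0 < σ) (c : ℝ) :
    Integrable (fun x => max c x) (gumbelMeasure m σ) := by
  have := isProbabilityMeasure_gumbelMeasure m hσ
  exact (integrable_const c).sup (integrable_id_gumbelMeasure m hσ)

theorem integral_max_gumbelMeasure (hσ : 0 < σ) (c : ℝ) :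
    ∫ x, max c x ∂gumbelMeasure m σ = m + σ * E1 (gumbelToExp m σ c) := by
  have := isProbabilityMeasure_gumbelMeasure m hσ
  have hid := integrable_id_gumbelMeasure m hσ
  have hmax (x : ℝ) : max c x = x + max (c - x) 0 := by
    rw [← max_add_add_left, add_sub_cancel, add_zero]
  have hpos : Integrable (fun x => max (c - x) 0) (gumbelMeasure m σ) :=
    ((integrable_const c).sub hid).pos_part
  simp_rw [hmax]
  rw [integral_add hid hpos, integral_id_gumbelMeasure m hσ,
    integral_max_sub_gumbelMeasure m hσ]

end Gumbel

section Product

variable {ι : Type*} [Fintype ι]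

theorem pi_withDensity_ofReal {α : ι → Type*} [∀ i, MeasurableSpace (α i)]
    {ν : ∀ i, Measure (α i)} [∀ i, SigmaFinite (ν i)] {f : ∀ i, α i → ℝ}
    (hf : ∀ i, Integrable (f i) (ν i)) (hf0 : ∀ i x, 0 ≤ f i x) :
    Measure.pi (fun i => (ν i).withDensity fun x => ENNReal.ofReal (f i x)) =
      (Measure.pi ν).withDensity fun z => ENNReal.ofReal (∏ i, f i (z i)) := by
  have (i : ι) : IsFiniteMeasure ((ν i).withDensity fun x => ENNReal.ofReal (f i x)) :=
    isFiniteMeasure_withDensity_ofReal (hf i).2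
  refine Measure.pi_eq fun s hs => ?_
  rw [withDensity_apply _ (MeasurableSet.univ_pi hs), Measure.restrict_pi_pi,
    ← ofReal_integral_eq_lintegral_ofReal (.fintype_prod_dep fun i => (hf i).restrict)
      (.of_forall fun z => Finset.prod_nonneg fun i _ => hf0 i (z i)),
    integral_fintype_prod_eq_prod,
    ENNReal.ofReal_prod_of_nonneg fun i _ => integral_nonneg (hf0 i)]
  refine Finset.prod_congr rfl fun i _ => ?_
  rw [withDensity_apply _ (hs i), ofReal_integral_eq_lintegral_ofReal (hf i).restrict
    (.of_forall (hf0 i))]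

variable (m : ι → ℝ) {σ : ι → ℝ}

theorem pi_gumbelMeasure_eq_withDensity (hσ : ∀ i, 0 < σ i) :
    Measure.pi (fun i => gumbelMeasure (m i) (σ i)) =
      volume.withDensity fun z => ENNReal.ofReal (∏ i, locScaleGumbelPdf (m i) (σ i) (z i)) :=
  pi_withDensity_ofReal (fun i => integrable_locScaleGumbelPdf (m i) (hσ i))
    fun i x => locScaleGumbelPdf_nonneg (m i) x (hσ i)

theorem prod_locScaleGumbelPdf_nonneg (hσ : ∀ i, 0 < σ i) (z : ι → ℝ) :
    0 ≤ ∏ i, locScaleGumbelPdf (m i) (σ i) (z i) :=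
  Finset.prod_nonneg fun i _ => locScaleGumbelPdf_nonneg (m i) (z i) (hσ i)

theorem integrable_pi_gumbelMeasure_iff (hσ : ∀ i, 0 < σ i) {f : (ι → ℝ) → ℝ} :
    Integrable f (Measure.pi fun i => gumbelMeasure (m i) (σ i)) ↔
      Integrable fun z => f z * ∏ i, locScaleGumbelPdf (m i) (σ i) (z i) := by
  rw [pi_gumbelMeasure_eq_withDensity m hσ, integrable_withDensity_iff (by fun_prop) (by simp)]
  simp only [ENNReal.toReal_ofReal (prod_locScaleGumbelPdf_nonneg m hσ _)]

theorem integral_pi_gumbelMeasure (hσ : ∀ i, 0 < σ i) (f : (ι → ℝ) → ℝ) :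
    ∫ z, f z ∂Measure.pi (fun i => gumbelMeasure (m i) (σ i)) =
      ∫ z, f z * ∏ i, locScaleGumbelPdf (m i) (σ i) (z i) := by
  rw [pi_gumbelMeasure_eq_withDensity m hσ,
    integral_withDensity_eq_integral_toReal_smul (by fun_prop) (by simp)]
  simp only [ENNReal.toReal_ofReal (prod_locScaleGumbelPdf_nonneg m hσ _), smul_eq_mul, mul_comm]

end Product

/-- The log-sum-exp function `log ∑ i, e^{w i}`, the smooth maximum through which the locations
of Gumbel variables combine; the quantities `A_k` of the Emax formula are its values. -/
noncomputable def logSumExp {ι : Type*} [Fintype ι] (w : ι → ℝ) : ℝ := log (∑ i, exp (w i))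

section MaxStable

variable {ι : Type*} [Fintype ι] [Nonempty ι] (u μ : ι → ℝ) {σ : ℝ}

theorem exp_logSumExp (w : ι → ℝ) : exp (logSumExp w) = ∑ i, exp (w i) :=
  exp_log (Finset.sum_pos (fun _ _ => exp_pos _) Finset.univ_nonempty)

theorem gumbelToExp_mul_logSumExp (hσ : 0 < σ) (x : ℝ) :
    gumbelToExp (σ * logSumExp fun i => (u i + μ i) / σ) σ x =
      ∑ i, gumbelToExp (μ i) σ (x - u i) := by
  calc gumbelToExp (σ * logSumExp fun i => (u i + μ i) / σ) σ x
      = exp (logSumExp fun i => (u i + μ i) / σ) * exp (-(x / σ + γ)) := by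
        rw [gumbelToExp, ← exp_add]
        congr 1
        field_simp
        ring
    _ = ∑ i, gumbelToExp (μ i) σ (x - u i) := by
        rw [exp_logSumExp, Finset.sum_mul]
        refine Finset.sum_congr rfl fun i _ => ?_
        rw [gumbelToExp, ← exp_add]
        ring_nf

theorem map_sup'_pi_gumbelMeasure (hσ : 0 < σ) :
    (Measure.pi fun i => gumbelMeasure (μ i) σ).map
        (fun z => Finset.univ.sup' Finset.univ_nonempty fun i => u i + z i) =
      gumbelMeasure (σ * logSumExp fun i => (u i + μ i) / σ) σ := by
  have (i : ι) := isProbabilityMeasure_gumbelMeasure (μ i) hσ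
  refine Measure.ext_of_Iic _ _ fun x => ?_
  have hpre : (fun z : ι → ℝ => Finset.univ.sup' Finset.univ_nonempty fun i => u i + z i) ⁻¹'
      Iic x = univ.pi fun i => Iic (x - u i) := by
    ext z
    simp [Pi.le_def, le_sub_iff_add_le']
  rw [Measure.map_apply (by fun_prop) measurableSet_Iic, hpre, Measure.pi_pi,
    gumbelMeasure_Iic _ _ hσ, gumbelToExp_mul_logSumExp u μ hσ, ← Finset.sum_neg_distrib, exp_sum,
    ENNReal.ofReal_prod_of_nonneg fun i _ => exp_nonneg _]
  exact Finset.prod_congr rfl fun i _ => gumbelMeasure_Iic _ _ hσ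

theorem integrable_max_sup'_pi_gumbelMeasure (hσ : 0 < σ) (c : ℝ) :
    Integrable (fun z => max c (Finset.univ.sup' Finset.univ_nonempty fun i => u i + z i))
      (Measure.pi fun i => gumbelMeasure (μ i) σ) := by
  have h := integrable_max_gumbelMeasure (σ * logSumExp fun i => (u i + μ i) / σ) hσ c
  rw [← map_sup'_pi_gumbelMeasure u μ hσ] at h
  exact h.comp_measurable (by fun_prop)

theorem integral_max_sup'_pi_gumbelMeasure (hσ : 0 < σ) (c : ℝ) :
    ∫ z, max c (Finset.univ.sup' Finset.univ_nonempty fun i => u i + z i)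
        ∂Measure.pi (fun i => gumbelMeasure (μ i) σ) =
      σ * (logSumExp (fun i => (u i + μ i) / σ) +
        E1 (exp (-(c / σ + γ - logSumExp fun i => (u i + μ i) / σ)))) := by
  have harg (A : ℝ) : gumbelToExp (σ * A) σ c = exp (-(c / σ + γ - A)) := by
    rw [gumbelToExp]
    congr 1
    field_simp
    ring
  rw [mul_add, ← harg, ← integral_max_gumbelMeasure _ hσ, ← map_sup'_pi_gumbelMeasure u μ hσ,
    integral_map (by fun_prop : Measurable _).aemeasurable (by fun_prop)]

end MaxStable

theorem sup'_univ_fin_succ {n : ℕ} [Nonempty (Fin n)] {α : Type*} [SemilatticeSup α]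
    (f : Fin (n + 1) → α) :
    Finset.univ.sup' Finset.univ_nonempty f =
      f 0 ⊔ Finset.univ.sup' Finset.univ_nonempty fun j : Fin n => f j.succ := by
  refine eq_of_forall_ge_iff fun c => ?_
  simp [Fin.forall_fin_succ]

theorem emax_of_gumbel_mixture_general {ι κ : Type*} [Fintype ι] [Nonempty ι] [Fintype κ]
    (c : ℝ) (u : ι → ℝ) (ω : κ → ℝ) (μ : κ → ι → ℝ) (σ : κ → ℝ) (hσ : ∀ k, 0 < σ k) :
    ∫ z : ι → ℝ, max c (Finset.univ.sup' Finset.univ_nonempty fun i => u i + z i) *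
        ∑ k, ω k * ∏ i, locScaleGumbelPdf (μ k i) (σ k) (z i) =
      ∑ k, ω k * σ k * (logSumExp (fun i => (u i + μ k i) / σ k) +
        E1 (exp (-(c / σ k + γ - logSumExp fun i => (u i + μ k i) / σ k)))) := by
  simp only [Finset.mul_sum, mul_left_comm _ (ω _)]
  rw [integral_finsetSum _ fun k _ => ((integrable_pi_gumbelMeasure_iff (μ k) fun _ => hσ k).1
    (integrable_max_sup'_pi_gumbelMeasure u (μ k) (hσ k) c)).const_mul (ω k)]
  refine Finset.sum_congr rfl fun k _ => ?_
  rw [integral_const_mul, ← integral_pi_gumbelMeasure (μ k) fun _ => hσ k,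
    integral_max_sup'_pi_gumbelMeasure u (μ k) (hσ k), mul_assoc]

/-- Emax formula under a finite location-scale mixture of Gumbels. -/
theorem emax_of_gumbel_mixture
    (J m : ℕ) (hJ : 1 ≤ J) (hm : 1 ≤ m)
    (v : Fin (J + 1) → ℝ)
    (ω : Fin m → ℝ) (μ : Fin m → Fin J → ℝ) (σ : Fin m → ℝ)
    (hω : ∀ k, 0 < ω k) (hωsum : ∑ k, ω k = 1) (hσ : ∀ k, 0 < σ k)
    (A a : Fin m → ℝ)
    (hA : ∀ k, A k = Real.log (∑ j : Fin J, Real.exp ((v j.succ + μ k j) / σ k)))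
    (ha : ∀ k, a k = v 0 / σ k + Real.eulerMascheroniConstant - A k) :
    ∫ z : Fin J → ℝ,
        (Finset.univ.sup' Finset.univ_nonempty
          (fun j : Fin (J + 1) => v j + Fin.cases 0 z j)) *
          (∑ k, ω k * mGumbelPdf (μ k) (σ k) z) =
      ∑ k, ω k * σ k * (A k + E1 (Real.exp (-a k))) := by
  have : Nonempty (Fin J) := ⟨⟨0, hJ⟩⟩
  simpa only [sup'_univ_fin_succ, Fin.cases_zero, Fin.cases_succ, add_zero, ha, hA] using!
    emax_of_gumbel_mixture_general (v 0) (fun j => v j.succ) ω μ σ hσ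
end

section
/- Consider the dynamic discrete choice model with finite state space, and suppose |u(x,j)| ≤ ū < ∞ for all x ∈ X and j = 0,1,…,J. Let F be a probability distribution on ℝ^{J+1} with a density and with E_F|ε_j| < ∞ for all j, and let F̃ be any probability distribution on ℝ^{J+1} with a density and finite first moments. Then, with C = max{1, ū + β(ū + Σ_{j=0}^J E_F|ε_j|)/(1−β)} / (1−β), the Emax functions satisfy sup_{x∈X} |Q(x;F) − Q(x;F̃)| ≤ C · ρ(F,F̃). -/
open MeasureTheory Real

/-!
The expected maximum `v ↦ ∫ maxⱼ (vⱼ + εⱼ) dF` is nonexpansive in the deterministic utilities `v`,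
so for every shock distribution the Bellman operator is a `β`-contraction in the sup norm. The Emax
functions of `F` and `F̃` are therefore at distance at most `(1 - β)⁻¹` times the distance between
the two operators at `Q(·; F)`. That distance is controlled by `ρ`, because at the choice values `v`
of `Q(·; F)` the maximum is at most `‖v‖ + Σⱼ |εⱼ| ≤ max 1 ‖v‖ * (1 + Σⱼ |εⱼ|)` in absolute value.
Finally, the contraction started at `0` bounds `‖Q(·; F)‖`, hence `‖v‖`.
-/

open Finset Function
open scoped NNReal

theorem abs_sum_mul_le_sum_abs_mul_norm {X : Type*} [Fintype X] (p q : X → ℝ) :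
    |∑ y, p y * q y| ≤ (∑ y, |p y|) * ‖q‖ := by
  calc |∑ y, p y * q y| ≤ ∑ y, |p y * q y| := abs_sum_le_sum_abs _ _
    _ ≤ ∑ y, |p y| * ‖q‖ := sum_le_sum fun y _ => by
        rw [abs_mul]
        exact mul_le_mul_of_nonneg_left (norm_le_pi_norm q y) (abs_nonneg _)
    _ = (∑ y, |p y|) * ‖q‖ := (sum_mul _ _ _).symm

theorem pi_norm_le_sum_abs {ι : Type*} [Fintype ι] (z : ι → ℝ) : ‖z‖ ≤ ∑ j, |z j| :=
  (pi_norm_le_iff_of_nonneg (sum_nonneg fun j _ => abs_nonneg (z j))).2 fun j =>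
    single_le_sum (f := fun i => |z i|) (fun i _ => abs_nonneg (z i)) (mem_univ j)

theorem lipschitzWith_sup'_univ {ι : Type*} [Fintype ι] [Nonempty ι] :
    LipschitzWith 1 fun v : ι → ℝ => univ.sup' univ_nonempty v :=
  LipschitzWith.of_le_add fun v w => sup'_le _ _ fun j hj => by
    have hvw : v j - w j ≤ dist v w := (le_abs_self _).trans (dist_le_pi_dist v w j)
    have hw : w j ≤ univ.sup' univ_nonempty w := le_sup' w hj
    linarith

section SocialSurplus

variable {ι : Type*} [Fintype ι] {μ : Measure (ι → ℝ)} {f g : (ι → ℝ) → ℝ}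

/-- `f` is the density with respect to `μ` of a probability distribution of shocks with finite first
moments. Any two distributions have a common reference measure `μ`, for instance their sum. -/
structure IsShockDensity (μ : Measure (ι → ℝ)) (f : (ι → ℝ) → ℝ) : Prop where
  nonneg : ∀ z, 0 ≤ f z
  integrable : Integrable f μ
  integral_eq_one : ∫ z, f z ∂μ = 1
  integrable_abs_mul : ∀ j, Integrable (fun z => |z j| * f z) μ

/-- The distance `ρ` between the shock distributions with densities `f` and `g` with respect to
`μ`. -/
noncomputable def shockDist (μ : Measure (ι → ℝ)) (f g : (ι → ℝ) → ℝ) : ℝ :=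
  ∫ z, (1 + ∑ j, |z j|) * |f z - g z| ∂μ

theorem shockDist_nonneg : 0 ≤ shockDist μ f g :=
  integral_nonneg fun z => by positivity

theorem integrable_const_add_sum_abs_mul_abs (hf : Integrable f μ)
    (hmom : ∀ j, Integrable (fun z => |z j| * f z) μ) (c : ℝ) :
    Integrable (fun z => (c + ∑ j, |z j|) * |f z|) μ := by
  simp only [add_mul, sum_mul]
  refine (hf.abs.const_mul c).add (integrable_finsetSum _ fun j _ => ?_)
  simpa only [abs_mul, abs_abs] using (hmom j).abs

variable [Nonempty ι]

/-- The ex-post utility `maxⱼ (vⱼ + zⱼ)` of the best action, at deterministic utilities `v` and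
realized shocks `z`. -/
noncomputable def indirectUtility (v z : ι → ℝ) : ℝ :=
  univ.sup' univ_nonempty fun j => v j + z j

theorem abs_indirectUtility_sub_le (v w z : ι → ℝ) :
    |indirectUtility v z - indirectUtility w z| ≤ dist v w := by
  simpa [indirectUtility, Real.dist_eq] using lipschitzWith_sup'_univ.dist_le_mul (v + z) (w + z)

theorem abs_indirectUtility_le (v z : ι → ℝ) : |indirectUtility v z| ≤ ‖v‖ + ∑ j, |z j| := by
  have hnorm : |indirectUtility v z| ≤ ‖v + z‖ := by
    simpa using! lipschitzWith_sup'_univ.dist_le_mul (v + z) 0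
  exact hnorm.trans ((norm_add_le v z).trans (add_le_add_right (pi_norm_le_sum_abs z) ‖v‖))

theorem continuous_indirectUtility (v : ι → ℝ) : Continuous (indirectUtility v) :=
  lipschitzWith_sup'_univ.continuous.comp (continuous_const_add v)

/-- McFadden's social surplus `∫ maxⱼ (vⱼ + εⱼ) dF`: the expected utility of the best action when
the shock distribution `F` has density `f` with respect to `μ`. -/
noncomputable def socialSurplus (μ : Measure (ι → ℝ)) (f : (ι → ℝ) → ℝ) (v : ι → ℝ) : ℝ :=
  ∫ z, indirectUtility v z * f z ∂μ

theorem integrable_indirectUtility_mul (hf : Integrable f μ)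
    (hmom : ∀ j, Integrable (fun z => |z j| * f z) μ) (v : ι → ℝ) :
    Integrable (fun z => indirectUtility v z * f z) μ := by
  refine (integrable_const_add_sum_abs_mul_abs hf hmom ‖v‖).mono'
    ((continuous_indirectUtility v).aestronglyMeasurable.mul hf.aestronglyMeasurable)
    (ae_of_all _ fun z => ?_)
  rw [norm_mul]
  exact mul_le_mul_of_nonneg_right (abs_indirectUtility_le v z) (norm_nonneg _)

theorem abs_socialSurplus_sub_le_mul_shockDist
    (hf : Integrable f μ) (hfmom : ∀ j, Integrable (fun z => |z j| * f z) μ)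
    (hg : Integrable g μ) (hgmom : ∀ j, Integrable (fun z => |z j| * g z) μ) (v : ι → ℝ) :
    |socialSurplus μ f v - socialSurplus μ g v| ≤ max 1 ‖v‖ * shockDist μ f g := by
  have hweight : Integrable (fun z => (1 + ∑ j, |z j|) * |f z - g z|) μ :=
    integrable_const_add_sum_abs_mul_abs (hf.sub hg)
      (fun j => by simpa only [Pi.sub_apply, mul_sub] using! (hfmom j).sub (hgmom j)) 1
  have hbound (z : ι → ℝ) :
      |indirectUtility v z| ≤ max 1 ‖v‖ * (1 + ∑ j, |z j|) := by
    calc |indirectUtility v z| ≤ ‖v‖ + 1 * ∑ j, |z j| := by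
          simpa only [one_mul] using abs_indirectUtility_le v z
      _ ≤ max 1 ‖v‖ + max 1 ‖v‖ * ∑ j, |z j| := by gcongr <;> simp
      _ = max 1 ‖v‖ * (1 + ∑ j, |z j|) := by ring
  rw [socialSurplus, socialSurplus, ← integral_sub (integrable_indirectUtility_mul hf hfmom v)
    (integrable_indirectUtility_mul hg hgmom v), shockDist, ← integral_const_mul,
    ← Real.norm_eq_abs]
  refine norm_integral_le_of_norm_le (hweight.const_mul _) (ae_of_all _ fun z => ?_)
  rw [← mul_sub, norm_mul, ← mul_assoc]
  exact mul_le_mul_of_nonneg_right (hbound z) (norm_nonneg _)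

namespace IsShockDensity

theorem abs_socialSurplus_le (hf : IsShockDensity μ f) (v : ι → ℝ) :
    |socialSurplus μ f v| ≤ ‖v‖ + ∑ j, ∫ z, |z j| * f z ∂μ := by
  have hmom : Integrable (fun z => ∑ j, |z j| * f z) μ :=
    integrable_finsetSum _ fun j _ => hf.integrable_abs_mul j
  calc |socialSurplus μ f v| ≤ ∫ z, (‖v‖ * f z + ∑ j, |z j| * f z) ∂μ := by
        rw [← Real.norm_eq_abs]
        refine norm_integral_le_of_norm_le ((hf.integrable.const_mul _).add hmom)
          (ae_of_all _ fun z => ?_)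
        rw [norm_mul, norm_of_nonneg (hf.nonneg z), ← sum_mul, ← add_mul]
        exact mul_le_mul_of_nonneg_right (abs_indirectUtility_le v z) (hf.nonneg z)
    _ = ‖v‖ + ∑ j, ∫ z, |z j| * f z ∂μ := by
        rw [integral_add (hf.integrable.const_mul _) hmom, integral_const_mul,
          hf.integral_eq_one, mul_one, integral_finsetSum _ fun j _ => hf.integrable_abs_mul j]

theorem lipschitzWith_socialSurplus (hf : IsShockDensity μ f) :
    LipschitzWith 1 (socialSurplus μ f) := by
  have hint := integrable_indirectUtility_mul hf.integrable hf.integrable_abs_mul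
  refine LipschitzWith.mk_one fun v w => ?_
  calc dist (socialSurplus μ f v) (socialSurplus μ f w)
      = |∫ z, (indirectUtility v z * f z - indirectUtility w z * f z) ∂μ| := by
        rw [integral_sub (hint v) (hint w)]; rfl
    _ ≤ ∫ z, dist v w * f z ∂μ := by
        rw [← Real.norm_eq_abs]
        refine norm_integral_le_of_norm_le (hf.integrable.const_mul _) (ae_of_all _ fun z => ?_)
        rw [← sub_mul, norm_mul, norm_of_nonneg (hf.nonneg z)]
        exact mul_le_mul_of_nonneg_right (abs_indirectUtility_sub_le v w z) (hf.nonneg z)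
    _ = dist v w := by rw [integral_const_mul, hf.integral_eq_one, mul_one]

end IsShockDensity

end SocialSurplus

section Bellman

variable {X ι : Type*} [Fintype X] {u : X → ι → ℝ} {β : ℝ≥0} {G : ι → X → X → ℝ}

/-- The choice-specific value `u(x, j) + β Σ_y Gʲ_{xy} q(y)` of action `j` in state `x`, net of its
shock, when `q` is the continuation value. -/
def choiceValue (u : X → ι → ℝ) (β : ℝ≥0) (G : ι → X → X → ℝ) (q : X → ℝ) (x : X) (j : ι) : ℝ :=
  u x j + β * ∑ y, G j x y * q y

variable [Fintype ι]

theorem lipschitzWith_choiceValue {x : X} (hG : ∀ j, ∑ y, |G j x y| ≤ 1) :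
    LipschitzWith β fun q => choiceValue u β G q x := by
  refine LipschitzWith.of_dist_le_mul fun q r => (dist_pi_le_iff (by positivity)).2 fun j => ?_
  have hexp : |∑ y, G j x y * (q - r) y| ≤ dist q r := by
    rw [dist_eq_norm]
    exact (abs_sum_mul_le_sum_abs_mul_norm _ _).trans
      (mul_le_of_le_one_left (norm_nonneg _) (hG j))
  calc dist (choiceValue u β G q x j) (choiceValue u β G r x j)
      = β * |∑ y, G j x y * (q - r) y| := by
        simp only [choiceValue, dist_add_left, Real.dist_eq, Pi.sub_apply, mul_sub,
          sum_sub_distrib]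
        rw [← mul_sub, abs_mul, NNReal.abs_eq]
    _ ≤ β * dist q r := by gcongr

variable [Nonempty ι]

theorem norm_choiceValue_le {x : X} (hG : ∀ j, ∑ y, |G j x y| ≤ 1) {ubar : ℝ}
    (hu : ∀ j, |u x j| ≤ ubar) (q : X → ℝ) :
    ‖choiceValue u β G q x‖ ≤ ubar + β * ‖q‖ := by
  have hzero : choiceValue u β G 0 x = u x := by
    funext j
    simp [choiceValue]
  calc ‖choiceValue u β G q x‖ ≤ ‖u x‖ + dist (choiceValue u β G q x) (u x) := by
        rw [dist_eq_norm]
        exact norm_le_norm_add_norm_sub' _ _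
    _ ≤ ubar + β * ‖q‖ := by
        refine add_le_add ((pi_norm_le_iff_of_nonempty _).2 hu) ?_
        simpa only [hzero, dist_zero_right] using
          (lipschitzWith_choiceValue (u := u) (β := β) hG).dist_le_mul q 0

/-- The Bellman operator whose fixed point is the Emax function `Q(·; F)`, for the shock
distribution `F` with density `f` with respect to `μ`. -/
noncomputable def bellman (u : X → ι → ℝ) (β : ℝ≥0) (G : ι → X → X → ℝ) (μ : Measure (ι → ℝ))
    (f : (ι → ℝ) → ℝ) (q : X → ℝ) (x : X) : ℝ :=
  socialSurplus μ f (choiceValue u β G q x)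

variable {μ : Measure (ι → ℝ)} {f g : (ι → ℝ) → ℝ} {Q Qt : X → ℝ}

theorem contractingWith_bellman (hβ : β < 1) (hG : ∀ j x, ∑ y, |G j x y| ≤ 1)
    (hf : IsShockDensity μ f) : ContractingWith β (bellman u β G μ f) := by
  refine ⟨hβ, LipschitzWith.of_dist_le_mul fun q r =>
    (dist_pi_le_iff (by positivity)).2 fun x => ?_⟩
  simpa only [one_mul] using!
    (hf.lipschitzWith_socialSurplus.comp
      (lipschitzWith_choiceValue fun j => hG j x)).dist_le_mul q r

theorem norm_le_of_isFixedPt_bellman [Nonempty X] (hβ : β < 1)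
    (hG : ∀ j x, ∑ y, |G j x y| ≤ 1) {ubar : ℝ} (hu : ∀ x j, |u x j| ≤ ubar)
    (hf : IsShockDensity μ f) (hQ : IsFixedPt (bellman u β G μ f) Q) :
    ‖Q‖ ≤ (ubar + ∑ j, ∫ z, |z j| * f z ∂μ) / (1 - β) := by
  have hzero : ‖bellman u β G μ f 0‖ ≤ ubar + ∑ j, ∫ z, |z j| * f z ∂μ :=
    (pi_norm_le_iff_of_nonempty _).2 fun x => (hf.abs_socialSurplus_le _).trans <| by
      gcongr
      simpa using norm_choiceValue_le (fun j => hG j x) (hu x) 0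
  calc ‖Q‖ ≤ ‖bellman u β G μ f 0‖ / (1 - β) := by
        simpa only [dist_zero_left] using
          (contractingWith_bellman hβ hG hf).dist_le_of_fixedPoint 0 hQ
    _ ≤ (ubar + ∑ j, ∫ z, |z j| * f z ∂μ) / (1 - β) :=
        div_le_div_of_nonneg_right hzero (sub_nonneg.2 hβ.le)

theorem dist_bellman_le_mul_shockDist (hG : ∀ j x, ∑ y, |G j x y| ≤ 1) {ubar : ℝ}
    (hu : ∀ x j, |u x j| ≤ ubar)
    (hf : Integrable f μ) (hfmom : ∀ j, Integrable (fun z => |z j| * f z) μ)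
    (hg : Integrable g μ) (hgmom : ∀ j, Integrable (fun z => |z j| * g z) μ) (q : X → ℝ) :
    dist (bellman u β G μ f q) (bellman u β G μ g q) ≤
      max 1 (ubar + β * ‖q‖) * shockDist μ f g := by
  refine (dist_pi_le_iff (mul_nonneg (by positivity) shockDist_nonneg)).2 fun x => ?_
  calc dist (bellman u β G μ f q x) (bellman u β G μ g q x)
      ≤ max 1 ‖choiceValue u β G q x‖ * shockDist μ f g :=
        abs_socialSurplus_sub_le_mul_shockDist hf hfmom hg hgmom _
    _ ≤ max 1 (ubar + β * ‖q‖) * shockDist μ f g := by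
        gcongr
        · exact shockDist_nonneg
        · exact norm_choiceValue_le (fun j => hG j x) (hu x) q

theorem emax_lipschitz_in_shock_distribution_general (hβ : β < 1)
    (hG : ∀ j x, ∑ y, |G j x y| ≤ 1) {ubar : ℝ} (hu : ∀ x j, |u x j| ≤ ubar)
    (hf : IsShockDensity μ f) (hg : IsShockDensity μ g)
    (hQ : IsFixedPt (bellman u β G μ f) Q) (hQt : IsFixedPt (bellman u β G μ g) Qt) (x : X) :
    |Q x - Qt x| ≤
      max 1 (ubar + β * (ubar + ∑ j, ∫ z, |z j| * f z ∂μ) / (1 - β)) / (1 - β) *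
        shockDist μ f g := by
  have : Nonempty X := ⟨x⟩
  have hβ' : (0 : ℝ) ≤ 1 - β := sub_nonneg.2 hβ.le
  calc |Q x - Qt x| ≤ dist Q Qt := dist_le_pi_dist Q Qt x
    _ ≤ dist (bellman u β G μ f Q) (bellman u β G μ g Q) / (1 - β) := by
        simpa only [hQ.eq] using (contractingWith_bellman hβ hG hg).dist_le_of_fixedPoint Q hQt
    _ ≤ max 1 (ubar + β * ‖Q‖) * shockDist μ f g / (1 - β) := by
        gcongr
        exact dist_bellman_le_mul_shockDist hG hu hf.integrable hf.integrable_abs_mul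
          hg.integrable hg.integrable_abs_mul Q
    _ = max 1 (ubar + β * ‖Q‖) / (1 - β) * shockDist μ f g := mul_div_right_comm _ _ _
    _ ≤ _ := by
        rw [mul_div_assoc]
        gcongr
        · exact shockDist_nonneg
        · exact norm_le_of_isFixedPt_bellman hβ hG hu hf hQ

end Bellman

/-- Lipschitz continuity of the Emax function in the distribution of shocks,
in the distance `ρ(F,F̃) = ∫ (1 + Σ_j |ε_j|)|f(ε) − f̃(ε)| dε`. -/
theorem emax_lipschitz_in_shock_distribution
    (K J : ℕ) (hK : 1 ≤ K)
    (u : Fin K → Fin (J + 1) → ℝ) (β : ℝ) (hβ0 : 0 ≤ β) (hβ1 : β < 1)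
    (G : Fin (J + 1) → Fin K → Fin K → ℝ)
    (hGpos : ∀ d x y, 0 ≤ G d x y) (hGsum : ∀ d x, ∑ y, G d x y = 1)
    (ubar : ℝ) (hu : ∀ x j, |u x j| ≤ ubar)
    -- the density `f` of `F` and the density `ftil` of `F̃`
    (f ftil : (Fin (J + 1) → ℝ) → ℝ)
    (hfmeas : Measurable f) (hfnonneg : ∀ z, 0 ≤ f z)
    (hfint : Integrable f) (hfprob : ∫ z, f z = 1)
    (hfmom : ∀ j, Integrable fun z : Fin (J + 1) → ℝ => |z j| * f z)
    (hgmeas : Measurable ftil) (hgnonneg : ∀ z, 0 ≤ ftil z)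
    (hgint : Integrable ftil) (hgprob : ∫ z, ftil z = 1)
    (hgmom : ∀ j, Integrable fun z : Fin (J + 1) → ℝ => |z j| * ftil z)
    -- `Q` and `Qt` solve the Bellman equations under `F` and `F̃`, respectively
    (Q Qt : Fin K → ℝ)
    (hQ : ∀ x, Q x = ∫ z : Fin (J + 1) → ℝ,
      (Finset.univ.sup' Finset.univ_nonempty
        (fun j : Fin (J + 1) => u x j + β * ∑ y, G j x y * Q y + z j)) * f z)
    (hQt : ∀ x, Qt x = ∫ z : Fin (J + 1) → ℝ,
      (Finset.univ.sup' Finset.univ_nonempty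
        (fun j : Fin (J + 1) => u x j + β * ∑ y, G j x y * Qt y + z j)) * ftil z)
    (C : ℝ)
    (hC : C = max 1 (ubar + β * (ubar + ∑ j, ∫ z : Fin (J + 1) → ℝ, |z j| * f z) / (1 - β))
      / (1 - β)) :
    ∀ x, |Q x - Qt x| ≤
      C * ∫ z : Fin (J + 1) → ℝ, (1 + ∑ j, |z j|) * |f z - ftil z| := by
  exact hC ▸ emax_lipschitz_in_shock_distribution_general (β := ⟨β, hβ0⟩) hβ1
    (fun j x => by simp only [abs_of_nonneg (hGpos j x _), hGsum, le_refl]) hu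
    ⟨hfnonneg, hfint, hfprob, hfmom⟩ ⟨hgnonneg, hgint, hgprob, hgmom⟩
    (funext fun x => (hQ x).symm) (funext fun x => (hQt x).symm)
end

section
/- For every δ̄ > 0 there exist constants K₁, K₂, K₃, K₄ > 0 such that for all z ∈ ℝ and all δ ∈ ℝ with |δ| ≤ δ̄, |φ(z) − φ(z − δ)| ≤ L_φ(z) |δ|, where L_φ(z) = K₁ e^{−(z+γ)} e^{−e^{−K₂(z+γ)}} if z > −γ, and L_φ(z) = K₃ e^{−2(z+γ)} e^{−e^{−K₄(z+γ)}} otherwise. -/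
/-!
In the variable `t = e^{-(z+γ)}` the Gumbel density is `t e^{-t}`, and `dt/dz = -t`, so its slope
has absolute value `t e^{-t} |t - 1|`. Moving `z` by at most `d` multiplies `t` by a factor between
`c⁻¹` and `c`, where `c = e^d`; hence the slope stays below `c t e^{-t/c} (c t + 1)`. For `t ≤ 1`
this is at most a constant times `t e^{-t}`, because `e^{-t/c} ≤ 1 ≤ e · e^{-t}`. For `t ≥ 1` the
factor `e^{-t/c}` is not bounded by a multiple of `e^{-t}`, but `√t ≤ t/c + c` by AM-GM, so the
slope is at most a constant times `t² e^{-√t}`, where `√t = e^{-(z+γ)/2}`.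
-/

open MeasureTheory Real

/-- `-log F`, where `F z = exp (-e^{-(z+γ)})` is the distribution function of the standardized
Gumbel law. It serves as the coordinate `t` in which the density is `t e^{-t}`. -/
noncomputable def gumbelNegLogCdf (z : ℝ) : ℝ :=
  exp (-(z + eulerMascheroniConstant))

theorem gumbelNegLogCdf_pos (z : ℝ) : 0 < gumbelNegLogCdf z :=
  exp_pos _

theorem gumbelNegLogCdf_le_one_iff {z : ℝ} :
    gumbelNegLogCdf z ≤ 1 ↔ -eulerMascheroniConstant ≤ z := by
  rw [gumbelNegLogCdf, exp_le_one_iff, neg_nonpos, neg_le_iff_add_nonneg]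

theorem one_le_gumbelNegLogCdf_iff {z : ℝ} :
    1 ≤ gumbelNegLogCdf z ↔ z ≤ -eulerMascheroniConstant := by
  rw [gumbelNegLogCdf, one_le_exp_iff, neg_nonneg, ← le_neg_iff_add_nonpos_right]

theorem gumbelNegLogCdf_le_exp_mul {d x y : ℝ} (h : |x - y| ≤ d) :
    gumbelNegLogCdf x ≤ exp d * gumbelNegLogCdf y := by
  rw [gumbelNegLogCdf, gumbelNegLogCdf, ← exp_add, exp_le_exp]
  linarith [neg_le_of_abs_le h]

theorem sq_gumbelNegLogCdf (z : ℝ) :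
    gumbelNegLogCdf z ^ 2 = exp (-(2 * (z + eulerMascheroniConstant))) := by
  rw [gumbelNegLogCdf, ← exp_nat_mul]
  push_cast
  ring_nf

theorem sqrt_gumbelNegLogCdf (z : ℝ) :
    √(gumbelNegLogCdf z) = exp (-(1 / 2 * (z + eulerMascheroniConstant))) := by
  rw [gumbelNegLogCdf, ← exp_half]
  ring_nf

theorem hasDerivAt_gumbelNegLogCdf (z : ℝ) :
    HasDerivAt gumbelNegLogCdf (-gumbelNegLogCdf z) z :=
  ((hasDerivAt_id z).add_const eulerMascheroniConstant).fun_neg.exp.congr_deriv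
    (mul_neg_one _)

theorem gumbelPdf_eq_gumbelNegLogCdf_mul_exp (z : ℝ) :
    gumbelPdf z = gumbelNegLogCdf z * exp (-gumbelNegLogCdf z) := by
  rw [gumbelPdf, gumbelNegLogCdf, ← exp_add]
  ring_nf

theorem hasDerivAt_gumbelPdf (z : ℝ) :
    HasDerivAt gumbelPdf
      (gumbelNegLogCdf z * exp (-gumbelNegLogCdf z) * (gumbelNegLogCdf z - 1)) z := by
  have ht := hasDerivAt_gumbelNegLogCdf z
  rw [funext gumbelPdf_eq_gumbelNegLogCdf_mul_exp]
  exact (ht.mul ht.fun_neg.exp).congr_deriv (by ring)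

/-- Upper bound for `|s e^{-s} (s - 1)|`, the absolute slope of the Gumbel density where
`gumbelNegLogCdf` equals `s`, over all `s ≥ 0` between `c⁻¹ * t` and `c * t`. -/
noncomputable def gumbelSlopeBound (c t : ℝ) : ℝ :=
  c * t * exp (-(c⁻¹ * t)) * (c * t + 1)

theorem abs_mul_exp_neg_mul_sub_one_le_gumbelSlopeBound {c s t : ℝ} (hs : 0 ≤ s)
    (hl : c⁻¹ * t ≤ s) (hu : s ≤ c * t) :
    |s * exp (-s) * (s - 1)| ≤ gumbelSlopeBound c t := by
  have hsub : |s - 1| ≤ c * t + 1 := abs_le.mpr ⟨by linarith, by linarith⟩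
  have hct : 0 ≤ c * t := hs.trans hu
  rw [abs_mul, abs_of_nonneg (by positivity), gumbelSlopeBound]
  gcongr

theorem abs_gumbelPdf_sub_le {d x y : ℝ} (h : |x - y| ≤ d) :
    |gumbelPdf x - gumbelPdf y| ≤ gumbelSlopeBound (exp d) (gumbelNegLogCdf x) * |x - y| := by
  have hslope (v : ℝ) (hv : v ∈ Metric.closedBall x d) :
      ‖gumbelNegLogCdf v * exp (-gumbelNegLogCdf v) * (gumbelNegLogCdf v - 1)‖ ≤
        gumbelSlopeBound (exp d) (gumbelNegLogCdf x) := by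
    rw [Metric.mem_closedBall, dist_eq] at hv
    refine abs_mul_exp_neg_mul_sub_one_le_gumbelSlopeBound (gumbelNegLogCdf_pos v).le ?_
      (gumbelNegLogCdf_le_exp_mul hv)
    rw [inv_mul_le_iff₀ (exp_pos d)]
    exact gumbelNegLogCdf_le_exp_mul (abs_sub_comm v x ▸ hv)
  have hy : y ∈ Metric.closedBall x d := by rwa [Metric.mem_closedBall', dist_eq]
  exact (convex_closedBall x d).norm_image_sub_le_of_norm_hasDerivWithin_le
    (fun v _ => (hasDerivAt_gumbelPdf v).hasDerivWithinAt) hslope hy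
    (Metric.mem_closedBall_self ((abs_nonneg _).trans h))

theorem gumbelSlopeBound_le_of_le_one {c t : ℝ} (hc : 0 ≤ c) (ht₀ : 0 ≤ t) (ht₁ : t ≤ 1) :
    gumbelSlopeBound c t ≤ c * (c + 1) * exp 1 * t * exp (-t) := by
  have hexp : exp (-(c⁻¹ * t)) ≤ exp 1 * exp (-t) := by
    have : 0 ≤ c⁻¹ * t := by positivity
    rw [← exp_add, exp_le_exp]
    linarith
  calc
    c * t * exp (-(c⁻¹ * t)) * (c * t + 1) ≤ c * t * (exp 1 * exp (-t)) * (c * 1 + 1) := by gcongr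
    _ = c * (c + 1) * exp 1 * t * exp (-t) := by ring

theorem sqrt_le_inv_mul_add {c t : ℝ} (hc : 0 < c) (ht : 0 ≤ t) : √t ≤ c⁻¹ * t + c := by
  have hamgm := two_mul_le_add_mul_sq (a := √t) (b := 1) (inv_pos.mpr hc)
  rw [sq_sqrt ht, inv_inv] at hamgm
  linarith [sqrt_nonneg t]

theorem gumbelSlopeBound_le_of_one_le {c t : ℝ} (hc : 0 < c) (ht : 1 ≤ t) :
    gumbelSlopeBound c t ≤ c * (c + 1) * exp c * t ^ 2 * exp (-√t) := by
  have hexp : exp (-(c⁻¹ * t)) ≤ exp c * exp (-√t) := by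
    rw [← exp_add, exp_le_exp]
    linarith [sqrt_le_inv_mul_add hc (zero_le_one.trans ht)]
  calc
    c * t * exp (-(c⁻¹ * t)) * (c * t + 1) ≤ c * t * (exp c * exp (-√t)) * (c * t + t) := by gcongr
    _ = c * (c + 1) * exp c * t ^ 2 * exp (-√t) := by ring

/-- Local Lipschitz continuity of the univariate Gumbel density in location, with an
explicit envelope. -/
theorem gumbel_locally_lipschitz_location (δbar : ℝ) (hδbar : 0 < δbar) :
    ∃ K1 K2 K3 K4 : ℝ, 0 < K1 ∧ 0 < K2 ∧ 0 < K3 ∧ 0 < K4 ∧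
      ∀ z δ : ℝ, |δ| ≤ δbar →
        |gumbelPdf z - gumbelPdf (z - δ)| ≤
          (if z > -Real.eulerMascheroniConstant then
            K1 * Real.exp (-(z + Real.eulerMascheroniConstant)) *
              Real.exp (-Real.exp (-(K2 * (z + Real.eulerMascheroniConstant))))
          else
            K3 * Real.exp (-(2 * (z + Real.eulerMascheroniConstant))) *
              Real.exp (-Real.exp (-(K4 * (z + Real.eulerMascheroniConstant))))) * |δ| := by
  set c := exp δbar
  have hc : 0 < c := exp_pos δbar
  refine ⟨c * (c + 1) * exp 1, 1, c * (c + 1) * exp c, 1 / 2, by positivity, one_pos,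
    by positivity, one_half_pos, fun z δ hδ => ?_⟩
  have hlip : |gumbelPdf z - gumbelPdf (z - δ)| ≤ gumbelSlopeBound c (gumbelNegLogCdf z) * |δ| := by
    simpa only [sub_sub_cancel] using
      abs_gumbelPdf_sub_le (x := z) (y := z - δ) (by rwa [sub_sub_cancel])
  refine hlip.trans (mul_le_mul_of_nonneg_right ?_ (abs_nonneg δ))
  split_ifs with hz
  · rw [one_mul]
    exact gumbelSlopeBound_le_of_le_one hc.le (gumbelNegLogCdf_pos z).le
      (gumbelNegLogCdf_le_one_iff.mpr hz.le)
  · rw [← sq_gumbelNegLogCdf, ← sqrt_gumbelNegLogCdf]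
    exact gumbelSlopeBound_le_of_one_le hc (one_le_gumbelNegLogCdf_iff.mpr (not_lt.mp hz))
end
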